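/- Let (Ω, P) be a probability space, let k ≥ 2 be an integer, β̂ > 0, and let X : Ω → ℝ have the Gamma distribution with integer shape k and scale β̂. Let Y : Ω → ℝ be independent of X, with Y ≥ 0 almost surely, integrable, and E[Y] = m. Let α > 0, p > 0 and C ≥ 0 be real constants. Then the random variable ω ↦ (α²·p·C·X(ω) + p·Y(ω) + 1)/(α²·p·X(ω)) is integrable and its expectation equals C + (m + 1/p)/((k−1)·α²·β̂). -/

import Mathlib

open MeasureTheory ProbabilityTheory

/-!
Off the null event `X = 0`, the inverse SINR is `C + X⁻¹ * ((Y + 1 / p) / α ^ 2)`, so by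
independence only `E[X⁻¹]` is needed. Multiplying the Gamma density of shape `a` by `x ^ s` gives,
up to a constant, the Gamma density of shape `a + s`, which has total mass one; this yields the
moments of order `s > -a`, and `s = -1` gives `E[X⁻¹] = r / (a - 1)` for the rate `r`.
-/

section GammaMoments

variable {a r s : ℝ} {E : Type*} [NormedAddCommGroup E] [NormedSpace ℝ E]

lemma measurable_gammaPDF (a r : ℝ) : Measurable (gammaPDF a r) :=
  (measurable_gammaPDFReal a r).ennreal_ofReal

lemma integrable_gammaMeasure_iff (ha : 0 < a) (hr : 0 < r) {f : ℝ → E} :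
    Integrable f (gammaMeasure a r) ↔ Integrable fun x ↦ gammaPDFReal a r x • f x := by
  rw [gammaMeasure, integrable_withDensity_iff_integrable_smul'
    (measurable_gammaPDF a r) (ae_of_all _ fun _ ↦ ENNReal.ofReal_lt_top)]
  simp only [gammaPDF, ENNReal.toReal_ofReal (gammaPDFReal_nonneg ha hr _)]

lemma integral_gammaMeasure (ha : 0 < a) (hr : 0 < r) (f : ℝ → E) :
    ∫ x, f x ∂gammaMeasure a r = ∫ x, gammaPDFReal a r x • f x := by
  rw [gammaMeasure, integral_withDensity_eq_integral_toReal_smul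
    (measurable_gammaPDF a r) (ae_of_all _ fun _ ↦ ENNReal.ofReal_lt_top)]
  simp only [gammaPDF, ENNReal.toReal_ofReal (gammaPDFReal_nonneg ha hr _)]

lemma integrable_gammaPDFReal (ha : 0 < a) (hr : 0 < r) : Integrable (gammaPDFReal a r) := by
  have := isProbabilityMeasure_gammaMeasure ha hr
  simpa only [smul_eq_mul, mul_one] using
    (integrable_gammaMeasure_iff ha hr).1 (integrable_const (1 : ℝ))

lemma integral_gammaPDFReal_eq_one (ha : 0 < a) (hr : 0 < r) : ∫ x, gammaPDFReal a r x = 1 := by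
  have := isProbabilityMeasure_gammaMeasure ha hr
  simpa using (integral_gammaMeasure ha hr fun _ ↦ (1 : ℝ)).symm

lemma gammaMeasure_absolutelyContinuous (a r : ℝ) : gammaMeasure a r ≪ volume :=
  withDensity_absolutelyContinuous volume (gammaPDF a r)

lemma gammaPDFReal_mul_rpow (hr : 0 < r) (has : 0 < a + s) {x : ℝ} (hx : x ≠ 0) :
    gammaPDFReal a r x * x ^ s =
      Real.Gamma (a + s) / (Real.Gamma a * r ^ s) * gammaPDFReal (a + s) r x := by
  rcases hx.lt_or_gt with hneg | hpos
  · simp [gammaPDFReal, hneg.not_ge]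
  · have hΓ : Real.Gamma (a + s) ≠ 0 := (Real.Gamma_pos_of_pos has).ne'
    have hrs : r ^ s ≠ 0 := (Real.rpow_pos_of_pos hr s).ne'
    have hxpow : x ^ (a + s - 1) = x ^ (a - 1) * x ^ s := by
      rw [← Real.rpow_add hpos]
      ring_nf
    rw [gammaPDFReal, gammaPDFReal, if_pos hpos.le, if_pos hpos.le, hxpow, Real.rpow_add hr]
    field_simp

lemma gammaPDFReal_mul_rpow_ae_eq (hr : 0 < r) (has : 0 < a + s) :
    (fun x ↦ gammaPDFReal a r x * x ^ s) =ᵐ[volume]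
      fun x ↦ Real.Gamma (a + s) / (Real.Gamma a * r ^ s) * gammaPDFReal (a + s) r x :=
  (Measure.ae_ne volume 0).mono fun _ ↦ gammaPDFReal_mul_rpow hr has

lemma integrable_rpow_gammaMeasure (ha : 0 < a) (hr : 0 < r) (has : 0 < a + s) :
    Integrable (fun x ↦ x ^ s) (gammaMeasure a r) :=
  (integrable_gammaMeasure_iff ha hr).2 <|
    ((integrable_gammaPDFReal has hr).const_mul _).congr (gammaPDFReal_mul_rpow_ae_eq hr has).symm

lemma integral_rpow_gammaMeasure (ha : 0 < a) (hr : 0 < r) (has : 0 < a + s) :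
    ∫ x, x ^ s ∂gammaMeasure a r = Real.Gamma (a + s) / (Real.Gamma a * r ^ s) := by
  simp only [integral_gammaMeasure ha hr, smul_eq_mul]
  rw [integral_congr_ae (gammaPDFReal_mul_rpow_ae_eq hr has),
    integral_const_mul, integral_gammaPDFReal_eq_one has hr, mul_one]

lemma integrable_inv_gammaMeasure (ha : 1 < a) (hr : 0 < r) :
    Integrable (fun x ↦ x⁻¹) (gammaMeasure a r) := by
  simpa only [Real.rpow_neg_one] using
    integrable_rpow_gammaMeasure (s := -1) (by linarith) hr (by linarith)

lemma integral_inv_gammaMeasure (ha : 1 < a) (hr : 0 < r) :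
    ∫ x, x⁻¹ ∂gammaMeasure a r = r / (a - 1) := by
  have hmoment := integral_rpow_gammaMeasure (s := -1) (by linarith) hr (by linarith : 0 < a + -1)
  have hΓ : Real.Gamma a = (a - 1) * Real.Gamma (a - 1) := by
    simpa only [sub_add_cancel] using Real.Gamma_add_one (sub_pos.2 ha).ne'
  have hΓ0 : Real.Gamma (a - 1) ≠ 0 := (Real.Gamma_pos_of_pos (sub_pos.2 ha)).ne'
  simp only [Real.rpow_neg_one, ← sub_eq_add_neg, hΓ] at hmoment
  rw [hmoment]
  field_simp

end GammaMoments

/-- The inverse `1 / γ` of the uplink SINR `γ = α² p x / (α² p C x + p y + 1)`, for the signal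
gain `x` and the interference `y`. At `x = 0` it takes the junk value `0`. -/
noncomputable def inverseSINR (α p C x y : ℝ) : ℝ :=
  (α ^ 2 * p * C * x + p * y + 1) / (α ^ 2 * p * x)

lemma inverseSINR_eq_add_mul_inv {α p x : ℝ} (hα : α ≠ 0) (hp : p ≠ 0) (hx : x ≠ 0) (C y : ℝ) :
    inverseSINR α p C x y = C + x⁻¹ * ((y + 1 / p) / α ^ 2) := by
  unfold inverseSINR
  field_simp
  ring

section Expectation

variable {Ω : Type*} [MeasurableSpace Ω] {P : Measure Ω} {X Y : Ω → ℝ} {α p : ℝ}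

lemma integrable_inverseSINR_and_integral_eq [IsProbabilityMeasure P]
    (hX : ∀ᵐ ω ∂P, X ω ≠ 0) (hXinv : Integrable (fun ω ↦ (X ω)⁻¹) P) (hY : Integrable Y P)
    (hXY : IndepFun X Y P) (hα : α ≠ 0) (hp : p ≠ 0) (C : ℝ) :
    Integrable (fun ω ↦ inverseSINR α p C (X ω) (Y ω)) P ∧
    ∫ ω, inverseSINR α p C (X ω) (Y ω) ∂P
      = C + (∫ ω, (X ω)⁻¹ ∂P) * ((∫ ω, Y ω ∂P + 1 / p) / α ^ 2) := by
  have hae : (fun ω ↦ inverseSINR α p C (X ω) (Y ω)) =ᵐ[P]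
      fun ω ↦ C + (X ω)⁻¹ * ((Y ω + 1 / p) / α ^ 2) :=
    hX.mono fun ω hω ↦ inverseSINR_eq_add_mul_inv hα hp hω C (Y ω)
  have hnoise : Integrable (fun ω ↦ (Y ω + 1 / p) / α ^ 2) P :=
    (hY.add (integrable_const _)).div_const _
  have hindep : IndepFun (fun ω ↦ (X ω)⁻¹) (fun ω ↦ (Y ω + 1 / p) / α ^ 2) P :=
    hXY.comp measurable_inv ((measurable_id.add_const _).div_const _)
  have hprod : Integrable (fun ω ↦ (X ω)⁻¹ * ((Y ω + 1 / p) / α ^ 2)) P :=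
    hindep.integrable_mul hXinv hnoise
  refine ⟨((integrable_const C).add hprod).congr hae.symm, ?_⟩
  rw [integral_congr_ae hae, integral_add (integrable_const C) hprod,
    hindep.integral_fun_mul_eq_mul_integral hXinv.aestronglyMeasurable hnoise.aestronglyMeasurable,
    integral_div, integral_add hY (integrable_const _)]
  simp only [integral_const, probReal_univ, one_smul]

theorem inverse_sinr_expectation_general {a β : ℝ} (ha : 1 < a) (hβ : 0 < β)
    (hX : HasLaw X (gammaMeasure a (1 / β)) P) (hXY : IndepFun X Y P) (hY : Integrable Y P)
    (hα : α ≠ 0) (hp : p ≠ 0) (C : ℝ) :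
    Integrable (fun ω ↦ inverseSINR α p C (X ω) (Y ω)) P ∧
    ∫ ω, inverseSINR α p C (X ω) (Y ω) ∂P
      = C + (∫ ω, Y ω ∂P + 1 / p) / ((a - 1) * α ^ 2 * β) := by
  have hr : 0 < 1 / β := one_div_pos.2 hβ
  have := isProbabilityMeasure_gammaMeasure (zero_lt_one.trans ha) hr
  have := hX.isProbabilityMeasure
  have hX0 : ∀ᵐ ω ∂P, X ω ≠ 0 :=
    ae_of_ae_map hX.aemeasurable <| hX.map_eq ▸
      (gammaMeasure_absolutelyContinuous a (1 / β)).ae_le (Measure.ae_ne volume 0)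
  have hinv := integrable_inv_gammaMeasure ha hr
  have hXinv : Integrable (fun ω ↦ (X ω)⁻¹) P :=
    (hX.map_eq ▸ hinv).comp_aemeasurable hX.aemeasurable
  have hEinv : ∫ ω, (X ω)⁻¹ ∂P = 1 / β / (a - 1) :=
    (hX.integral_comp hinv.aestronglyMeasurable).trans (integral_inv_gammaMeasure ha hr)
  obtain ⟨hint, hE⟩ := integrable_inverseSINR_and_integral_eq hX0 hXinv hY hXY hα hp C
  refine ⟨hint, ?_⟩
  have ha1 : a - 1 ≠ 0 := (sub_pos.2 ha).ne'
  rw [hE, hEinv]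
  field_simp

end Expectation

/-- If X has the Gamma distribution with integer shape k ≥ 2 and scale β̂ > 0,
Y is independent of X, Y ≥ 0 a.s., Y is integrable with E[Y] = m, and α, p > 0, C ≥ 0,
then ω ↦ (α²·p·C·X(ω) + p·Y(ω) + 1)/(α²·p·X(ω)) is integrable with expectation
C + (m + 1/p)/((k−1)·α²·β̂). -/
theorem inverse_sinr_expectation {Ω : Type*} [MeasurableSpace Ω] (P : Measure Ω)
    [IsProbabilityMeasure P] (k : ℕ) (hk : 2 ≤ k) (βh : ℝ) (hβ : 0 < βh)
    (X Y : Ω → ℝ) (hXm : Measurable X) (hYm : Measurable Y)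
    (hX : Measure.map X P = gammaMeasure k (1 / βh))
    (hindep : IndepFun X Y P)
    (hYpos : ∀ᵐ ω ∂P, 0 ≤ Y ω) (hYint : Integrable Y P) (m : ℝ) (hm : ∫ ω, Y ω ∂P = m)
    (α p C : ℝ) (hα : 0 < α) (hp : 0 < p) (hC : 0 ≤ C) :
    Integrable (fun ω => (α ^ 2 * p * C * X ω + p * Y ω + 1) / (α ^ 2 * p * X ω)) P ∧
    ∫ ω, (α ^ 2 * p * C * X ω + p * Y ω + 1) / (α ^ 2 * p * X ω) ∂P
      = C + (m + 1 / p) / (((k : ℝ) - 1) * α ^ 2 * βh) := by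
  subst hm
  exact inverse_sinr_expectation_general (by exact_mod_cast hk) hβ ⟨hXm.aemeasurable, hX⟩ hindep
    hYint hα.ne' hp.ne' C
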